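/- Let (τ_m)_{m≥1} be a sequence of strictly positive real numbers and suppose ∑_{m≥1} τ_m^{−p} < ∞ for some p ∈ (0, 2]. Then ∑_{m≥1} τ_m² / m² = ∞. -/

import Mathlib

/-!
Since `ℓᵖ ⊆ ℓʳ` for `p ≤ r`, the sequence `τ⁻¹` lies in `ℓʳ`. If `τ * a` were in `ℓ^q` for the
conjugate exponent `q`, then Hölder's inequality applied to `a = (τ * a) * τ⁻¹` would make `a`
summable. The theorem is the case `q = r = 2`, with `a` the harmonic sequence.
-/

open Real

lemma summable_rpow_of_exponent_le {ι : Type*} {f : ι → ℝ} (hf : ∀ i, 0 ≤ f i) {p q : ℝ}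
    (hp : 0 < p) (hpq : p ≤ q) (hsum : Summable fun i => f i ^ p) :
    Summable fun i => f i ^ q := by
  have memℓp_iff {s : ℝ} (hs : 0 < s) :
      Memℓp f (ENNReal.ofReal s) ↔ Summable fun i => f i ^ s := by
    have hs' : (ENNReal.ofReal s).toReal = s := ENNReal.toReal_ofReal hs.le
    simp only [memℓp_gen_iff (hs'.symm ▸ hs), hs', Real.norm_of_nonneg (hf _)]
  exact (memℓp_iff (hp.trans_le hpq)).1 <|
    ((memℓp_iff hp).2 hsum).of_exponent_ge (ENNReal.ofReal_le_ofReal hpq)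

lemma tsum_ofReal_eq_top_iff_not_summable {ι : Type*} {f : ι → ℝ} (hf : ∀ i, 0 ≤ f i) :
    ∑' i, ENNReal.ofReal (f i) = ⊤ ↔ ¬ Summable f := by
  lift f to ι → NNReal using hf
  simp only [ENNReal.ofReal_coe_nnreal, ENNReal.tsum_coe_eq_top_iff_not_summable_coe]

lemma summable_subtype_le_iff {G : Type*} [AddCommGroup G] [TopologicalSpace G]
    [IsTopologicalAddGroup G] {f : ℕ → G} (k : ℕ) :
    (Summable fun n : {n : ℕ // k ≤ n} => f n) ↔ Summable f :=
  let e : {n // n ∉ Finset.range k} ≃ {n // k ≤ n} := .subtypeEquivRight fun n => by simp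
  e.summable_iff.symm.trans (Finset.range k).summable_compl_iff

lemma not_summable_mul_rpow {ι : Type*} {τ a : ι → ℝ} {p q r : ℝ} (hqr : q.HolderConjugate r)
    (hτ : ∀ i, 0 < τ i) (ha : ∀ i, 0 ≤ a i) (hp : p ∈ Set.Ioc 0 r)
    (hsum : Summable fun i => τ i ^ (-p)) (hdiv : ¬ Summable a) :
    ¬ Summable fun i => (τ i * a i) ^ q := by
  intro hmul
  have hτinv (i) : 0 ≤ (τ i)⁻¹ := (inv_pos.2 (hτ i)).le
  have hinv_p : Summable fun i => (τ i)⁻¹ ^ p :=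
    hsum.congr fun i => Real.rpow_neg_eq_inv_rpow (τ i) p
  have hinv_r : Summable fun i => (τ i)⁻¹ ^ r :=
    summable_rpow_of_exponent_le hτinv hp.1 hp.2 hinv_p
  have hfactor (i) : τ i * a i * (τ i)⁻¹ = a i := by
    rw [mul_right_comm, mul_inv_cancel₀ (hτ i).ne', one_mul]
  have hprod : Summable fun i => τ i * a i * (τ i)⁻¹ :=
    Real.summable_mul_of_Lp_Lq_of_nonneg hqr (fun i => mul_nonneg (hτ i).le (ha i)) hτinv
      hmul hinv_r
  exact hdiv <| hprod.congr hfactor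

theorem sum_sq_div_sq_eq_top_general {ι : Type*} {τ a : ι → ℝ} {p q r : ℝ}
    (hqr : q.HolderConjugate r) (hτ : ∀ i, 0 < τ i) (ha : ∀ i, 0 ≤ a i) (hp : p ∈ Set.Ioc 0 r)
    (hsum : Summable fun i => τ i ^ (-p)) (hdiv : ¬ Summable a) :
    ∑' i, ENNReal.ofReal ((τ i * a i) ^ q) = ⊤ :=
  (tsum_ofReal_eq_top_iff_not_summable fun i =>
    Real.rpow_nonneg (mul_nonneg (hτ i).le (ha i)) q).2 <|
      not_summable_mul_rpow hqr hτ ha hp hsum hdiv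

/-- Sequence-level core of the second part of Proposition A.2: if `(τ_m)_{m≥1}` is strictly
positive and `∑_{m≥1} τ_m ^ (−p) < ∞` for some `p ∈ (0, 2]`, then `∑_{m≥1} τ_m² / m² = ∞`. -/
theorem sum_sq_div_sq_eq_top
    (τ : ℕ → ℝ) (hτ : ∀ m : ℕ, 1 ≤ m → 0 < τ m)
    (p : ℝ) (hp : p ∈ Set.Ioc (0 : ℝ) 2)
    (hsum : Summable (fun m : {n : ℕ // 1 ≤ n} => (τ m) ^ (-p))) :
    ∑' m : {n : ℕ // 1 ≤ n}, ENNReal.ofReal ((τ m) ^ 2 / ((m : ℕ) : ℝ) ^ 2) = ⊤ := by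
  simpa only [mul_one_div, Real.rpow_two, div_pow] using
    sum_sq_div_sq_eq_top_general .two_two (fun m : {n : ℕ // 1 ≤ n} => hτ m m.2)
      (fun _ => Nat.one_div_cast_nonneg _) hp hsum
      ((summable_subtype_le_iff 1).not.2 Real.not_summable_one_div_natCast)
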